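/- Let k ∈ ℕ and let P ⊂ ℝ^k be a lattice polytope. Then for every integer n ≥ k, the following identity of subsets of ℤ^k holds: nP ∩ ℤ^k = (n−k)*(P ∩ ℤ^k) + (kP ∩ ℤ^k), where the sumset operations are taken in the additive group (ℤ^k, +). -/

import Mathlib

open Pointwise

/-- The `n`-fold sumset `n*A` in the additive group `ℤ^k`, with `0*A = {0}`. -/
def iterSumset {G : Type*} [AddCommMonoid G] : ℕ → Set G → Set G
  | 0, _ => {0}
  | n + 1, A => iterSumset n A + A

section ConvexHull

variable {𝕜 E : Type*} [Field 𝕜] [LinearOrder 𝕜] [IsStrictOrderedRing 𝕜] [AddCommGroup E]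
  [Module 𝕜 E] {S : Set E} {t : 𝕜}

theorem sum_smul_mem_sum_smul_of_convex {ι : Type*} {w : ι → 𝕜} {z : ι → E} (hS : Convex 𝕜 S)
    (hne : S.Nonempty) (s : Finset ι) (hw : ∀ i ∈ s, 0 ≤ w i) (hz : ∀ i ∈ s, z i ∈ S) :
    ∑ i ∈ s, w i • z i ∈ (∑ i ∈ s, w i) • S := by
  classical
  induction s using Finset.induction_on with
  | empty => simp [Set.zero_smul_set hne]
  | insert i s hi ih =>
    rw [Finset.forall_mem_insert] at hw hz
    rw [Finset.sum_insert hi, Finset.sum_insert hi,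
      hS.add_smul hw.1 (Finset.sum_nonneg hw.2)]
    exact Set.add_mem_add (Set.smul_mem_smul_set hz.1) (ih hw.2 hz.2)

theorem sum_smul_sub_smul_mem_smul_of_convex {ι : Type*} {w : ι → 𝕜} {z : ι → E}
    (hS : Convex 𝕜 S) {s : Finset ι} (hw : ∀ j ∈ s, 0 ≤ w j) (hz : ∀ j ∈ s, z j ∈ S) {i : ι}
    (hi : i ∈ s) {r : 𝕜} (hr : r ≤ w i) :
    ∑ j ∈ s, w j • z j - r • z i ∈ (∑ j ∈ s, w j - r) • S := by
  classical
  have hw_erase : ∀ j ∈ s.erase i, 0 ≤ w j := fun j hj => hw j (Finset.mem_of_mem_erase hj)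
  have h_erase : ∑ j ∈ s.erase i, w j • z j ∈ (∑ j ∈ s.erase i, w j) • S :=
    sum_smul_mem_sum_smul_of_convex hS ⟨z i, hz i hi⟩ _ hw_erase fun j hj =>
      hz j (Finset.mem_of_mem_erase hj)
  rw [← Finset.add_sum_erase s w hi, ← Finset.add_sum_erase s (fun j => w j • z j) hi,
    add_sub_right_comm, add_sub_right_comm, ← sub_smul,
    hS.add_smul (sub_nonneg.2 hr) (Finset.sum_nonneg hw_erase)]
  exact Set.add_mem_add (Set.smul_mem_smul_set (hz i hi)) h_erase

-- By Carathéodory's theorem a point of the hull uses at most `dim + 1` points of `S`, so after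
-- scaling by `t + 1` one of its coefficients is at least `1`.
theorem exists_mem_sub_mem_smul_convexHull [FiniteDimensional 𝕜 (vectorSpan 𝕜 S)]
    (ht : (Module.finrank 𝕜 (vectorSpan 𝕜 S) : 𝕜) ≤ t) {x : E}
    (hx : x ∈ (t + 1) • convexHull 𝕜 S) : ∃ v ∈ S, x - v ∈ t • convexHull 𝕜 S := by
  obtain ⟨y, hy, rfl⟩ := Set.mem_smul_set.1 hx
  obtain ⟨ι, _, z, w, hzS, hz, hw, hw_sum, rfl⟩ := eq_pos_convex_span_of_mem_convexHull hy
  have h_card : (Fintype.card ι : 𝕜) ≤ t + 1 := by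
    have h_dim : Fintype.card ι ≤ Module.finrank 𝕜 (vectorSpan 𝕜 S) + 1 :=
      hz.card_le_finrank_succ.trans <|
        Nat.succ_le_succ (Submodule.finrank_mono (vectorSpan_mono 𝕜 hzS))
    calc (Fintype.card ι : 𝕜) ≤ Module.finrank 𝕜 (vectorSpan 𝕜 S) + 1 := mod_cast h_dim
      _ ≤ t + 1 := by gcongr
  have h_sum : ∑ i, (t + 1) * w i = t + 1 := by rw [← Finset.mul_sum, hw_sum, mul_one]
  obtain ⟨i, hi, hwi⟩ : ∃ i ∈ Finset.univ, 1 ≤ (t + 1) * w i := by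
    refine Finset.exists_le_of_sum_le (Finset.nonempty_of_sum_ne_zero (hw_sum ▸ one_ne_zero)) ?_
    simpa [h_sum] using h_card
  have ht_nonneg : 0 ≤ t + 1 := add_nonneg ((Nat.cast_nonneg _).trans ht) zero_le_one
  have h_mem := sum_smul_sub_smul_mem_smul_of_convex (convex_convexHull 𝕜 S)
    (fun j _ => mul_nonneg ht_nonneg (hw j).le)
    (fun j _ => subset_convexHull 𝕜 S (hzS ⟨j, rfl⟩)) hi hwi
  refine ⟨z i, hzS ⟨i, rfl⟩, ?_⟩
  simpa only [h_sum, mul_smul, ← Finset.smul_sum, one_smul, add_sub_cancel_right] using h_mem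

variable {G : Type*} [AddCommGroup G] {φ : G →+ E} [FiniteDimensional 𝕜 (vectorSpan 𝕜 S)]

theorem preimage_add_one_smul_convexHull (hS : S ⊆ Set.range φ)
    (ht : (Module.finrank 𝕜 (vectorSpan 𝕜 S) : 𝕜) ≤ t) :
    φ ⁻¹' ((t + 1) • convexHull 𝕜 S) = φ ⁻¹' (t • convexHull 𝕜 S) + φ ⁻¹' convexHull 𝕜 S := by
  apply Set.Subset.antisymm
  · intro a ha
    obtain ⟨v, hv, hav⟩ := exists_mem_sub_mem_smul_convexHull ht ha
    obtain ⟨u, rfl⟩ := hS hv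
    refine ⟨a - u, ?_, u, subset_convexHull 𝕜 S hv, sub_add_cancel a u⟩
    rwa [Set.mem_preimage, map_sub]
  · rw [(convex_convexHull 𝕜 S).add_smul ((Nat.cast_nonneg _).trans ht) zero_le_one, one_smul]
    exact Set.preimage_add_preimage_subset φ

theorem dilated_lattice_polytope_lattice_points_decomposition_general
    (hS : S ⊆ Set.range φ) {m n : ℕ} (hm : Module.finrank 𝕜 (vectorSpan 𝕜 S) ≤ m) (hmn : m ≤ n) :
    φ ⁻¹' ((n : 𝕜) • convexHull 𝕜 S) =
      iterSumset (n - m) (φ ⁻¹' convexHull 𝕜 S) + φ ⁻¹' ((m : 𝕜) • convexHull 𝕜 S) := by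
  induction n, hmn using Nat.le_induction with
  | base => rw [Nat.sub_self, iterSumset, Set.singleton_zero, zero_add]
  | succ n hmn ih =>
    rw [Nat.cast_succ, preimage_add_one_smul_convexHull hS (mod_cast hm.trans hmn), ih,
      Nat.succ_sub hmn, iterSumset, add_right_comm]

end ConvexHull

/-- geometric lemma. Let `k ∈ ℕ`, `k ≥ 1`, and let `P ⊂ ℝ^k` be a
lattice polytope (the convex hull of a nonempty finite set `V` of points with integer
coordinates). Then for every integer `n ≥ k`,
`nP ∩ ℤ^k = (n−k)*(P ∩ ℤ^k) + (kP ∩ ℤ^k)` as subsets of `(ℤ^k, +)`. -/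
theorem dilated_lattice_polytope_lattice_points_decomposition
    {k : ℕ} (hk : 0 < k) (V : Finset (Fin k → ℝ)) (hVne : V.Nonempty)
    (hV : ∀ v ∈ V, ∀ i, ∃ z : ℤ, v i = (z : ℝ)) :
    ∀ n : ℕ, k ≤ n →
      {a : Fin k → ℤ |
          (fun i => (a i : ℝ)) ∈ (n : ℝ) • convexHull ℝ (V : Set (Fin k → ℝ))} =
        iterSumset (n - k)
            {a : Fin k → ℤ | (fun i => (a i : ℝ)) ∈ convexHull ℝ (V : Set (Fin k → ℝ))} +
          {a : Fin k → ℤ |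
            (fun i => (a i : ℝ)) ∈ (k : ℝ) • convexHull ℝ (V : Set (Fin k → ℝ))} := by
  intro n hn
  have hV_range : (V : Set (Fin k → ℝ)) ⊆ Set.range ((Int.castAddHom ℝ).compLeft (Fin k)) := by
    intro v hv
    choose z hz using hV v hv
    exact ⟨z, funext fun i => (hz i).symm⟩
  exact dilated_lattice_polytope_lattice_points_decomposition_general hV_range
    ((Submodule.finrank_le _).trans_eq (Module.finrank_fin_fun ℝ)) hn
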